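/- A finite connected simple graph (with at least one edge) is bipartite if and only if 2 is an eigenvalue of its normalized Laplacian. -/

import Mathlib

open SimpleGraph

def Bipartite {V : Type*} (G : SimpleGraph V) : Prop :=
  ∃ s : V → Bool, ∀ u v : V, G.Adj u v → s u ≠ s v

noncomputable def normLaplacian {V : Type*} [Fintype V] [DecidableEq V]
    (G : SimpleGraph V) [DecidableRel G.Adj] : Matrix V V ℝ :=
  1 - Matrix.of fun u v : V =>
    if G.Adj u v then 1 / (Real.sqrt (G.degree u) * Real.sqrt (G.degree v)) else 0

/-!
Since `D^{1/2} (2 - L) D^{1/2} = D + A`, when all degrees are positive `2` is an eigenvalue of `L`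
exactly when the signless Laplacian `D + A` is singular. Its quadratic form is
`∑_{u ∼ v} (y u + y v) ^ 2`, so its kernel consists of the functions that change sign along every
edge. On a connected graph such a function, if nonzero, vanishes nowhere, and its sign is a proper
2-colouring.
-/

open Matrix

section SignAlternating

variable {V R : Type*} {G : SimpleGraph V} {y : V → R}

/-- A function on the vertices is sign-alternating if its values at adjacent vertices are opposite,
possibly both zero; these functions form the kernel of the signless Laplacian. -/
def IsSignAlternating [Neg R] (G : SimpleGraph V) (y : V → R) : Prop :=
  ∀ ⦃u v : V⦄, G.Adj u v → y u = -y v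

lemma eq_of_reachable_of_forall_adj {f : V → R} (hf : ∀ ⦃u v : V⦄, G.Adj u v → f u = f v)
    {u v : V} (huv : G.Reachable u v) : f u = f v := by
  obtain ⟨p⟩ := huv
  induction p with
  | nil => rfl
  | cons hadj _ ih => exact (hf hadj).trans ih

lemma IsSignAlternating.forall_ne_zero [AddGroup R] (hy : IsSignAlternating G y)
    (hG : G.Preconnected) (hy0 : y ≠ 0) (v : V) : y v ≠ 0 := by
  obtain ⟨w, hw⟩ := Function.ne_iff.1 hy0
  have zero_iff_of_adj : ∀ ⦃u v : V⦄, G.Adj u v → (y u = 0) = (y v = 0) := fun u v huv => by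
    rw [hy huv, neg_eq_zero]
  exact fun hv => hw ((eq_of_reachable_of_forall_adj zero_iff_of_adj (hG w v)).mpr hv)

lemma IsSignAlternating.bipartite_of_forall_ne_zero [AddGroup R] [LinearOrder R] [AddLeftMono R]
    (hy : IsSignAlternating G y) (hy0 : ∀ v, y v ≠ 0) : Bipartite G := by
  refine ⟨fun v => decide (0 < y v), fun u v huv hs => ?_⟩
  have pos_iff : y v < 0 ↔ 0 < y v := by simpa [hy huv] using hs
  rcases (hy0 v).lt_or_gt with hv | hv
  · exact hv.asymm (pos_iff.1 hv)
  · exact hv.asymm (pos_iff.2 hv)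

lemma Bipartite.exists_isSignAlternating_ne_zero (R : Type*) [Ring R] [Nontrivial R] [Nonempty V]
    (hG : Bipartite G) : ∃ y : V → R, y ≠ 0 ∧ IsSignAlternating G y := by
  obtain ⟨s, hs⟩ := hG
  refine ⟨fun v => if s v then 1 else -1, Function.ne_iff.2 ⟨Classical.arbitrary V, ?_⟩,
    fun u v huv => ?_⟩
  · split_ifs <;> simp
  · simp only [Bool.eq_not_of_ne (hs u v huv)]
    cases s v <;> simp

lemma bipartite_iff_exists_isSignAlternating (R : Type*) [Ring R] [LinearOrder R]
    [IsStrictOrderedRing R] (hG : G.Connected) :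
    Bipartite G ↔ ∃ y : V → R, y ≠ 0 ∧ IsSignAlternating G y := by
  have := hG.nonempty
  refine ⟨fun h => h.exists_isSignAlternating_ne_zero R, ?_⟩
  rintro ⟨y, hy0, hy⟩
  exact hy.bipartite_of_forall_ne_zero (hy.forall_ne_zero hG.preconnected hy0)

end SignAlternating

section Laplacians

variable {V : Type*} [Fintype V] [DecidableEq V] (G : SimpleGraph V) [DecidableRel G.Adj]

/-- The signless Laplacian `D + A` of a graph with degree matrix `D` and adjacency matrix `A`. -/
def signlessLapMatrix (R : Type*) [AddMonoidWithOne R] : Matrix V V R :=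
  G.degMatrix R + G.adjMatrix R

lemma signlessLapMatrix_mulVec_apply {R : Type*} [NonAssocSemiring R] (y : V → R) (u : V) :
    (signlessLapMatrix G R *ᵥ y) u = ∑ v, if G.Adj u v then y u + y v else 0 := by
  simp_rw [signlessLapMatrix, add_mulVec, Pi.add_apply, degMatrix_mulVec_apply,
    adjMatrix_mulVec_apply, degree_eq_sum_if_adj, Finset.sum_mul, neighborFinset_eq_filter,
    Finset.sum_filter, ← Finset.sum_add_distrib, ite_mul, one_mul, zero_mul, ite_add_ite, add_zero]

lemma two_mul_dotProduct_signlessLapMatrix_mulVec {R : Type*} [CommSemiring R] (y : V → R) :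
    2 * (y ⬝ᵥ signlessLapMatrix G R *ᵥ y) =
      ∑ u, ∑ v, if G.Adj u v then (y u + y v) ^ 2 else 0 := by
  have form_eq : y ⬝ᵥ signlessLapMatrix G R *ᵥ y =
      ∑ u, ∑ v, if G.Adj u v then y u * (y u + y v) else 0 := by
    simp only [dotProduct, signlessLapMatrix_mulVec_apply, Finset.mul_sum, mul_ite, mul_zero]
  have form_eq_swap : y ⬝ᵥ signlessLapMatrix G R *ᵥ y =
      ∑ u, ∑ v, if G.Adj u v then y v * (y u + y v) else 0 := by
    rw [form_eq, Finset.sum_comm]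
    simp only [G.adj_comm, add_comm]
  rw [two_mul]
  nth_rw 1 [form_eq]
  rw [form_eq_swap]
  simp only [← Finset.sum_add_distrib, ite_add_ite, add_zero, ← add_mul, sq]

lemma signlessLapMatrix_mulVec_eq_zero_iff {R : Type*} [CommRing R] [LinearOrder R]
    [IsStrictOrderedRing R] (y : V → R) :
    signlessLapMatrix G R *ᵥ y = 0 ↔ IsSignAlternating G y := by
  constructor
  · intro hy u v huv
    have sum_sq_eq_zero : ∑ u, ∑ v, (if G.Adj u v then (y u + y v) ^ 2 else 0) = 0 := by
      rw [← two_mul_dotProduct_signlessLapMatrix_mulVec, hy, dotProduct_zero, mul_zero]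
    have forall_adj : ∀ u v, G.Adj u v → y u + y v = 0 := by
      simpa (disch := intros; positivity) [Finset.sum_eq_zero_iff_of_nonneg] using sum_sq_eq_zero
    exact eq_neg_of_add_eq_zero_left (forall_adj u v huv)
  · intro hy
    ext u
    rw [signlessLapMatrix_mulVec_apply]
    exact Finset.sum_eq_zero fun v _ => ite_eq_right_iff.2 fun huv => by
      rw [hy huv, neg_add_cancel]

lemma diagonal_sqrt_mul_two_sub_normLaplacian_mul_diagonal_sqrt :
    diagonal (fun v => √(G.degree v : ℝ)) * ((2 : ℝ) • 1 - normLaplacian G) *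
      diagonal (fun v => √(G.degree v : ℝ)) = signlessLapMatrix G ℝ := by
  have two_sub_eq : (2 : ℝ) • 1 - normLaplacian G = 1 + Matrix.of fun u v : V =>
      if G.Adj u v then 1 / (√(G.degree u : ℝ) * √(G.degree v : ℝ)) else 0 := by
    rw [normLaplacian, two_smul]
    abel
  rw [two_sub_eq, mul_add, add_mul, mul_one, diagonal_mul_diagonal, signlessLapMatrix]
  congr 1
  · simp only [Real.mul_self_sqrt (Nat.cast_nonneg _), degMatrix]
  · ext u v
    rw [mul_diagonal, diagonal_mul, of_apply, adjMatrix_apply]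
    split_ifs with huv
    · have hu : √(G.degree u : ℝ) ≠ 0 := by
        simpa using huv.degree_pos_left.ne'
      have hv : √(G.degree v : ℝ) ≠ 0 := by
        simpa using huv.degree_pos_right.ne'
      field_simp
    · simp only [mul_zero, zero_mul]

lemma det_signlessLapMatrix :
    (signlessLapMatrix G ℝ).det =
      (∏ v, (G.degree v : ℝ)) * ((2 : ℝ) • 1 - normLaplacian G).det := by
  rw [← diagonal_sqrt_mul_two_sub_normLaplacian_mul_diagonal_sqrt, det_mul, det_mul, det_diagonal,
    mul_right_comm, ← Finset.prod_mul_distrib]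
  simp only [Real.mul_self_sqrt (Nat.cast_nonneg _)]

end Laplacians

lemma exists_mulVec_eq_smul_iff_det_eq_zero {n K : Type*} [Fintype n] [DecidableEq n] [CommRing K]
    [IsDomain K] (M : Matrix n n K) (μ : K) :
    (∃ x : n → K, x ≠ 0 ∧ M *ᵥ x = μ • x) ↔ (μ • 1 - M).det = 0 := by
  rw [← exists_mulVec_eq_zero_iff]
  refine exists_congr fun x => and_congr_right fun _ => ?_
  rw [sub_mulVec, smul_mulVec, one_mulVec, sub_eq_zero, eq_comm]

/-- A finite connected graph with at least one edge is bipartite iff `2` is an eigenvalue of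
its normalized Laplacian. -/
theorem stmt10 {V : Type*} [Fintype V] [DecidableEq V] (G : SimpleGraph V)
    [DecidableRel G.Adj] (hconn : G.Connected) (hedge : ∃ u v : V, G.Adj u v) :
    Bipartite G ↔
      ∃ x : V → ℝ, x ≠ 0 ∧ (normLaplacian G).mulVec x = (2 : ℝ) • x := by
  obtain ⟨a, b, hab⟩ := hedge
  have : Nontrivial V := ⟨a, b, hab.ne⟩
  have prod_degree_ne_zero : ∏ v, (G.degree v : ℝ) ≠ 0 := Finset.prod_ne_zero_iff.2 fun v _ =>
    Nat.cast_ne_zero.2 (hconn.preconnected.degree_pos_of_nontrivial v).ne'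
  calc Bipartite G ↔ ∃ y : V → ℝ, y ≠ 0 ∧ IsSignAlternating G y :=
        bipartite_iff_exists_isSignAlternating ℝ hconn
    _ ↔ ∃ y : V → ℝ, y ≠ 0 ∧ signlessLapMatrix G ℝ *ᵥ y = 0 := by
        simp only [signlessLapMatrix_mulVec_eq_zero_iff]
    _ ↔ (signlessLapMatrix G ℝ).det = 0 := exists_mulVec_eq_zero_iff
    _ ↔ ((2 : ℝ) • 1 - normLaplacian G).det = 0 := by
        rw [det_signlessLapMatrix, mul_eq_zero_iff_left prod_degree_ne_zero]
    _ ↔ ∃ x : V → ℝ, x ≠ 0 ∧ (normLaplacian G).mulVec x = (2 : ℝ) • x :=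
        (exists_mulVec_eq_smul_iff_det_eq_zero _ _).symm
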